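/- For all integers 0 ≤ m ≤ n, the ordinary binomial coefficient is recovered from Gaussian binomial coefficients and q-Stirling numbers of the first kind by C(n,m) = Σ_{k=m}^n (q−1)^{k−m} binom(n,k)_q s_1(k,m,q), as an identity in K (with C(n,m) meaning the image of the integer binomial coefficient in K). (Equation (21).) -/

import Mathlib

/-- The q-analogue `[n]_q = (1 - q^n)/(1 - q)` of a natural number. -/
def qnum {K : Type*} [Field K] (q : K) (n : ℕ) : K := (1 - q ^ n) / (1 - q)

/-- The q-factorial `[n]_q! = ∏_{j=1}^n [j]_q`. -/
def qfact {K : Type*} [Field K] (q : K) (n : ℕ) : K :=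
  ∏ j ∈ Finset.range n, qnum q (j + 1)

/-- The Gaussian binomial coefficient, `0` for `k > n`. -/
def qbinom {K : Type*} [Field K] (q : K) (n k : ℕ) : K :=
  if k ≤ n then qfact q n / (qfact q k * qfact q (n - k)) else 0

/-- The q-Stirling number of the first kind: the coefficient of `T^k` in
`∏_{j=0}^{n-1} (T - [j]_q)`. -/
noncomputable def qStirling1 {K : Type*} [Field K] (q : K) (n k : ℕ) : K :=
  (∏ j ∈ Finset.range n, (Polynomial.X - Polynomial.C (qnum q j))).coeff k

/-!
The powers of `x` expand as `x ^ n = ∑ₖ binom(n,k)_q ∏_{j<k} (x - q ^ j)`, by induction on `n` from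
`x = (x - q ^ k) + q ^ k` and the q-Pascal rule. Substituting `x = 1 + (q - 1) X` turns `x - q ^ j`
into `(q - 1) (X - [j]_q)`, so that comparing the coefficients of `X ^ m` brings in the q-Stirling
numbers on one side and the ordinary binomial theorem on the other.
-/

section QBinomialTheorem

variable {K : Type*} [Field K] {q : K}

lemma sub_one_mul_qnum (q : K) (n : ℕ) : (q - 1) * qnum q n = q ^ n - 1 := by
  obtain rfl | hq := eq_or_ne q 1
  · simp
  · have : 1 - q ≠ 0 := sub_ne_zero.2 hq.symm
    rw [qnum]
    field_simp
    ring

lemma qnum_add (q : K) (m n : ℕ) : qnum q (m + n) = qnum q m + q ^ m * qnum q n := by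
  simp only [qnum]
  ring

lemma qnum_ne_zero {n : ℕ} (hn : q ^ n ≠ 1) : qnum q n ≠ 0 := fun h =>
  hn <| by rw [← sub_eq_zero, ← sub_one_mul_qnum, h, mul_zero]

@[simp]
lemma qfact_zero (q : K) : qfact q 0 = 1 := Finset.prod_range_zero _

lemma qfact_succ (q : K) (n : ℕ) : qfact q (n + 1) = qfact q n * qnum q (n + 1) :=
  Finset.prod_range_succ _ _

lemma qfact_ne_zero {n : ℕ} (hq : ∀ j ∈ Finset.Icc 1 n, q ^ j ≠ 1) : qfact q n ≠ 0 :=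
  Finset.prod_ne_zero_iff.2 fun j hj =>
    qnum_ne_zero <| hq (j + 1) <| Finset.mem_Icc.2 ⟨j.succ_pos, Finset.mem_range.1 hj⟩

lemma qfact_ne_zero_of_le {m n : ℕ} (hmn : m ≤ n) (hn : qfact q n ≠ 0) : qfact q m ≠ 0 :=
  ne_zero_of_dvd_ne_zero hn <|
    Finset.prod_dvd_prod_of_subset _ _ _ (Finset.range_subset_range.2 hmn)

lemma qbinom_eq_zero_of_lt (q : K) {n k : ℕ} (hnk : n < k) : qbinom q n k = 0 :=
  if_neg hnk.not_ge

lemma qbinom_add_left (q : K) (k d : ℕ) :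
    qbinom q (k + d) k = qfact q (k + d) / (qfact q k * qfact q d) := by
  rw [qbinom, if_pos (Nat.le_add_right k d), Nat.add_sub_cancel_left]

lemma qbinom_zero_right {n : ℕ} (hn : qfact q n ≠ 0) : qbinom q n 0 = 1 := by
  simp [qbinom, hn]

lemma qbinom_self {n : ℕ} (hn : qfact q n ≠ 0) : qbinom q n n = 1 := by
  simp [qbinom, hn]

lemma qbinom_succ_succ {n : ℕ} (hn : qfact q (n + 1) ≠ 0) (k : ℕ) :
    qbinom q (n + 1) (k + 1) = qbinom q n k + q ^ (k + 1) * qbinom q n (k + 1) := by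
  obtain hkn | rfl | hnk := lt_trichotomy k n
  · obtain ⟨d, rfl⟩ := Nat.exists_eq_add_of_le (Nat.succ_le_of_lt hkn)
    have hk : qfact q k * qnum q (k + 1) ≠ 0 :=
      qfact_succ q k ▸ qfact_ne_zero_of_le (by lia) hn
    have hd : qfact q d * qnum q (d + 1) ≠ 0 :=
      qfact_succ q d ▸ qfact_ne_zero_of_le (by lia) hn
    have h_left : qbinom q (k + 1 + d) k =
        qfact q (k + 1 + d) / (qfact q k * qfact q (d + 1)) := by
      rw [add_assoc, add_comm 1 d, qbinom_add_left]
    have h_split : qnum q (k + 1 + d + 1) = qnum q (k + 1) + q ^ (k + 1) * qnum q (d + 1) :=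
      qnum_add q (k + 1) (d + 1)
    rw [add_assoc (k + 1) d 1, qbinom_add_left, h_left, qbinom_add_left, ← add_assoc,
      qfact_succ q (k + 1 + d), h_split, qfact_succ q k, qfact_succ q d]
    obtain ⟨hk, hk'⟩ := mul_ne_zero_iff.1 hk
    obtain ⟨hd, hd'⟩ := mul_ne_zero_iff.1 hd
    field_simp
  · rw [qbinom_self hn, qbinom_self (qfact_ne_zero_of_le k.le_succ hn),
      qbinom_eq_zero_of_lt q k.lt_succ_self, mul_zero, add_zero]
  · simp only [qbinom_eq_zero_of_lt q hnk, qbinom_eq_zero_of_lt q (Nat.lt_succ_of_lt hnk),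
      qbinom_eq_zero_of_lt q (Nat.succ_lt_succ hnk), mul_zero, add_zero]

theorem pow_eq_sum_qbinom_smul_prod {A : Type*} [CommRing A] [Algebra K A] (x : A) {n : ℕ}
    (hn : qfact q n ≠ 0) :
    x ^ n = ∑ k ∈ Finset.range (n + 1),
      qbinom q n k • ∏ j ∈ Finset.range k, (x - algebraMap K A (q ^ j)) := by
  induction n with
  | zero => simp [qbinom_zero_right hn]
  | succ n ih =>
    have hn' : qfact q n ≠ 0 := qfact_ne_zero_of_le n.le_succ hn
    set P : ℕ → A := fun k => ∏ j ∈ Finset.range k, (x - algebraMap K A (q ^ j)) with hP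
    have P_succ (k : ℕ) : x * P k = P (k + 1) + q ^ k • P k := by
      simp only [hP, Finset.prod_range_succ, Algebra.smul_def]
      ring
    have sum_shift : ∑ k ∈ Finset.range (n + 1), (q ^ k * qbinom q n k) • P k =
        ∑ k ∈ Finset.range (n + 1), (q ^ (k + 1) * qbinom q n (k + 1)) • P (k + 1) + P 0 := by
      have := Finset.sum_range_succ' (fun k => (q ^ k * qbinom q n k) • P k) (n + 1)
      rwa [Finset.sum_range_succ, qbinom_eq_zero_of_lt q n.lt_succ_self, mul_zero, zero_smul,
        add_zero, qbinom_zero_right hn', pow_zero, mul_one, one_smul] at this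
    calc x ^ (n + 1)
        = ∑ k ∈ Finset.range (n + 1), qbinom q n k • (x * P k) := by
          rw [pow_succ', ih hn', Finset.mul_sum]
          exact Finset.sum_congr rfl fun k _ => mul_smul_comm _ _ _
      _ = ∑ k ∈ Finset.range (n + 1), qbinom q n k • P (k + 1) +
            ∑ k ∈ Finset.range (n + 1), (q ^ k * qbinom q n k) • P k := by
          simp only [P_succ, smul_add, smul_smul, Finset.sum_add_distrib, mul_comm]
      _ = ∑ k ∈ Finset.range (n + 1), qbinom q (n + 1) (k + 1) • P (k + 1) + P 0 := by
          simp only [sum_shift, qbinom_succ_succ hn, add_smul, Finset.sum_add_distrib, add_assoc]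
      _ = ∑ k ∈ Finset.range (n + 1 + 1), qbinom q (n + 1) k • P k := by
          rw [Finset.sum_range_succ' _ (n + 1), qbinom_zero_right hn, one_smul]

end QBinomialTheorem

section QStirling

open Polynomial

variable {K : Type*} [Field K] (q : K)

lemma qStirling1_eq_zero_of_lt {n k : ℕ} (hnk : n < k) : qStirling1 q n k = 0 :=
  coeff_eq_zero_of_natDegree_lt <| by
    rwa [natDegree_finsetProd_X_sub_C_eq_card, Finset.card_range]

lemma coeff_one_add_C_mul_X_pow {R : Type*} [CommSemiring R] (a : R) (n m : ℕ) :
    ((1 + C a * X) ^ n : R[X]).coeff m = n.choose m * a ^ m := by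
  have h_comp : ((1 + C a * X) ^ n : R[X]) = ((1 + X) ^ n : R[X]).comp (C a * X) := by simp
  rw [h_comp, comp_C_mul_X_coeff, coeff_one_add_X_pow]

lemma prod_one_add_C_mul_X_sub_C_pow (k : ℕ) :
    ∏ j ∈ Finset.range k, (1 + C (q - 1) * X - C (q ^ j)) =
      C ((q - 1) ^ k) * ∏ j ∈ Finset.range k, (X - C (qnum q j)) := by
  have factor (j : ℕ) :
      1 + C (q - 1) * X - C (q ^ j) = C (q - 1) * (X - C (qnum q j)) := by
    rw [mul_sub, ← C_mul, sub_one_mul_qnum]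
    simp only [C_sub, C_1]
    ring
  rw [Finset.prod_congr rfl fun j _ => factor j, Finset.prod_mul_distrib, Finset.prod_const,
    Finset.card_range, C_pow]

lemma choose_mul_sub_one_pow_eq_sum {n : ℕ} (hn : qfact q n ≠ 0) (m : ℕ) :
    (n.choose m : K) * (q - 1) ^ m =
      ∑ k ∈ Finset.range (n + 1), (q - 1) ^ k * qbinom q n k * qStirling1 q k m := by
  rw [← coeff_one_add_C_mul_X_pow, pow_eq_sum_qbinom_smul_prod (1 + C (q - 1) * X) hn,
    finsetSum_coeff]
  refine Finset.sum_congr rfl fun k _ => ?_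
  rw [algebraMap_eq, prod_one_add_C_mul_X_sub_C_pow, coeff_smul, coeff_C_mul, smul_eq_mul,
    qStirling1, mul_left_comm, mul_assoc]

end QStirling

theorem choose_eq_sum_qbinom_qStirling1_general {K : Type*} [Field K] (q : K) (n m : ℕ)
    (hq : ∀ j ∈ Finset.Icc 1 n, q ^ j ≠ 1) :
    (Nat.choose n m : K) = ∑ k ∈ Finset.Icc m n,
      (q - 1) ^ (k - m) * qbinom q n k * qStirling1 q k m := by
  obtain hnm | hmn := lt_or_ge n m
  · rw [Nat.choose_eq_zero_of_lt hnm, Finset.Icc_eq_empty_of_lt hnm, Nat.cast_zero,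
      Finset.sum_empty]
  have h_pow : (q - 1) ^ m ≠ 0 := by
    obtain rfl | hm := m.eq_zero_or_pos
    · simp
    · have hq1 : q ^ 1 ≠ 1 := hq 1 (Finset.mem_Icc.2 ⟨le_rfl, hm.trans_le hmn⟩)
      exact pow_ne_zero m (sub_ne_zero.2 (pow_one q ▸ hq1))
  have h_subset : Finset.Icc m n ⊆ Finset.range (n + 1) := fun k hk =>
    Finset.mem_range_succ_iff.2 (Finset.mem_Icc.1 hk).2
  refine mul_right_cancel₀ h_pow ?_
  rw [choose_mul_sub_one_pow_eq_sum q (qfact_ne_zero hq) m, Finset.sum_mul]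
  symm
  apply Finset.sum_subset_zero_on_sdiff h_subset
  · intro k hk
    have hkm : k < m := by
      simp only [Finset.mem_sdiff, Finset.mem_Icc, Finset.mem_range] at hk
      lia
    rw [qStirling1_eq_zero_of_lt q hkm, mul_zero]
  · intro k hk
    rw [← pow_sub_mul_pow (q - 1) (Finset.mem_Icc.1 hk).1]
    ring

/-- **Equation (21)**: for `0 ≤ m ≤ n`, the ordinary binomial coefficient is recovered
from Gaussian binomial coefficients and q-Stirling numbers of the first kind:
`C(n,m) = Σ_{k=m}^n (q-1)^{k-m} binom(n,k)_q s_1(k,m,q)`. -/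
theorem choose_eq_sum_qbinom_qStirling1
    {K : Type*} [Field K] [CharZero K] (q : K) (hq0 : q ≠ 0)
    (hq : ∀ n : ℕ, 1 ≤ n → q ^ n ≠ 1) (n m : ℕ) (hm : m ≤ n) :
    (Nat.choose n m : K) = ∑ k ∈ Finset.Icc m n,
      (q - 1) ^ (k - m) * qbinom q n k * qStirling1 q k m :=
  choose_eq_sum_qbinom_qStirling1_general q n m fun j hj => hq j (Finset.mem_Icc.1 hj).1
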